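/- Define E₂ = ⋃ L(ρ̂₁, ρ̂₂) ∩ Q̂ over all pairs of distinct positive roots ρ₁, ρ₂ ∈ Φ⁺, and E₂° = ⋃ L(α, ρ̂) ∩ Q̂ over all α ∈ Δ and ρ ∈ Φ⁺ with ρ̂ ≠ α. Then E₂ is the W-orbit of E₂° under the normalized action: E₂ = {w·x : w ∈ W, x ∈ E₂°} (every point x of E₂° lies in E(Φ), so w(x) ∉ V₀ and w·x is defined). -/

import Mathlib

open Filter Topology

noncomputable section

variable {ι V : Type*} [Fintype ι] [NormedAddCommGroup V] [NormedSpace ℝ V]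

/-- The set of simple `B`-reflections: the linear automorphisms of `V` given by the
`B`-reflection formula `u ↦ u - 2 (B α u / B α α) • α` associated to a simple root `α ∈ Δ`. -/
def simpleReflections (B : LinearMap.BilinForm ℝ V) (Δ : Module.Basis ι ℝ V) :
    Set (V ≃ₗ[ℝ] V) :=
  { e | ∃ i : ι, ∀ u : V, e u = u - (2 * B (Δ i) u / B (Δ i) (Δ i)) • Δ i }

/-- The geometric Coxeter group `W`: the subgroup of linear automorphisms of `V`
generated by the simple `B`-reflections. -/
def cox (B : LinearMap.BilinForm ℝ V) (Δ : Module.Basis ι ℝ V) : Subgroup (V ≃ₗ[ℝ] V) :=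
  Subgroup.closure (simpleReflections B Δ)

/-- The root system `Φ = W ⬝ Δ`. -/
def Phi (B : LinearMap.BilinForm ℝ V) (Δ : Module.Basis ι ℝ V) : Set V :=
  { ρ | ∃ w ∈ cox B Δ, ∃ i : ι, w (Δ i) = ρ }

/-- The positive roots `Φ⁺ = Φ ∩ cone(Δ)`. -/
def posPhi (B : LinearMap.BilinForm ℝ V) (Δ : Module.Basis ι ℝ V) : Set V :=
  { ρ ∈ Phi B Δ | ∀ i : ι, 0 ≤ Δ.repr ρ i }

/-- `|v|₁`: the sum of the coordinates of `v` in the basis `Δ`. -/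
def l1 (Δ : Module.Basis ι ℝ V) (v : V) : ℝ := ∑ i : ι, Δ.repr v i

/-- The normalization map `v ↦ v̂ = v / |v|₁`. -/
def nrm (Δ : Module.Basis ι ℝ V) (v : V) : V := (l1 Δ v)⁻¹ • v

/-- The set `Φ̂` of normalized roots. -/
def nPhi (B : LinearMap.BilinForm ℝ V) (Δ : Module.Basis ι ℝ V) : Set V :=
  nrm Δ '' posPhi B Δ

/-- `E(Φ)`: the set of accumulation points of the set of normalized roots. -/
def Eset (B : LinearMap.BilinForm ℝ V) (Δ : Module.Basis ι ℝ V) : Set V :=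
  { x | AccPt x (𝓟 (nPhi B Δ)) }

/-- The isotropic cone `Q` of `B`. -/
def isoQ (B : LinearMap.BilinForm ℝ V) : Set V := { v | B v v = 0 }

/-- The affine line through two points `a` and `b`. -/
def lineThrough (a b : V) : Set V := { y : V | ∃ t : ℝ, y = a + t • (b - a) }

/-- `E₂`: the union over all pairs of distinct positive roots `ρ₁, ρ₂` of
`L(ρ̂₁, ρ̂₂) ∩ Q̂`. -/
def E2 (B : LinearMap.BilinForm ℝ V) (Δ : Module.Basis ι ℝ V) : Set V :=
  { x : V | ∃ ρ₁ ∈ posPhi B Δ, ∃ ρ₂ ∈ posPhi B Δ, ρ₁ ≠ ρ₂ ∧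
      x ∈ lineThrough (nrm Δ ρ₁) (nrm Δ ρ₂) ∧ B x x = 0 ∧ l1 Δ x = 1 }

/-- `E₂°`: the union over all `α ∈ Δ` and `ρ ∈ Φ⁺` with `ρ̂ ≠ α` of `L(α, ρ̂) ∩ Q̂`. -/
def E2circ (B : LinearMap.BilinForm ℝ V) (Δ : Module.Basis ι ℝ V) : Set V :=
  { x : V | ∃ i : ι, ∃ ρ ∈ posPhi B Δ, nrm Δ ρ ≠ Δ i ∧
      x ∈ lineThrough (Δ i) (nrm Δ ρ) ∧ B x x = 0 ∧ l1 Δ x = 1 }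

/-!
Every root `w (Δ i)` has coordinates all of one sign. This is the classical argument on the length
of `w`: if `w sᵢ` is longer than `w ≠ 1`, then `w = v u` with `u` in a rank two parabolic subgroup
`⟨sᵢ, sⱼ⟩` and `v` shorter and of minimal length in its coset; `u (Δ i)` is a combination of `Δ i`
and `Δ j` whose coefficients are values of Chebyshev polynomials, nonnegative as long as `u` is
reduced, and `v (Δ i)`, `v (Δ j)` are positive roots by induction.

Let `x` be isotropic in the plane spanned by two roots `r`, `s`. Up to exchanging the roots, `x` is
an eigenvector of the product `T` of their reflections with eigenvalue `μ ≥ 1`, and `μ T r - r` is a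
nonzero multiple of `x`, so that the multiples `μⁿ Tⁿ r` of roots run off to infinity in direction
`x`. Hence `x` is a limit of multiples of roots. In particular its coordinates all have the same
sign, so `|x|₁ ≠ 0` and the normalization of `x` is in `E(Φ)`. Since `W` permutes these isotropic
vectors, every `w · x` is defined, and moving the root `r = w (Δ i)` to `Δ i` by `w⁻¹` carries any
point of `E₂` into `E₂°`.
-/

open Polynomial.Chebyshev CoxeterSystem

section Chebyshev

lemma eval_U_sub_one_nonneg_and_le {R : Type*} [CommRing R] [LinearOrder R] [IsStrictOrderedRing R]
    {c : R} (hc : 1 ≤ c) (n : ℕ) :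
    0 ≤ (U R (n - 1)).eval c ∧ (U R (n - 1)).eval c ≤ (U R n).eval c := by
  induction n with
  | zero => simp
  | succ n ih =>
    obtain ⟨h0, hle⟩ := ih
    have hrec : (U R (n + 1)).eval c = 2 * c * (U R n).eval c - (U R (n - 1)).eval c := by
      simp [U_add_one]
    push_cast
    rw [add_sub_cancel_right, hrec]
    exact ⟨h0.trans hle, by nlinarith⟩

lemma eval_U_cos_nonneg {θ : ℝ} (hθ : 0 < θ) (hθπ : θ < Real.pi) {n : ℤ} (hn : -1 ≤ n)
    (hnθ : (n + 1) * θ ≤ Real.pi) : 0 ≤ (U ℝ n).eval (Real.cos θ) := by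
  have hsin : 0 < Real.sin θ := Real.sin_pos_of_pos_of_lt_pi hθ hθπ
  have hn' : (0 : ℝ) ≤ n + 1 := by exact_mod_cast (by lia : 0 ≤ n + 1)
  refine nonneg_of_mul_nonneg_left ?_ hsin
  rw [U_real_cos]
  exact Real.sin_nonneg_of_nonneg_of_le_pi (by positivity) hnθ

end Chebyshev

section UnitReflection

variable {R M : Type*} [CommRing R] [AddCommGroup M] [Module R M] {B : LinearMap.BilinForm R M}

/-- The `B`-reflection in a vector `a` with `B a a = 1`, as a linear automorphism. -/
def unitReflection (B : LinearMap.BilinForm R M) {a : M} (ha : B a a = 1) : M ≃ₗ[R] M :=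
  Module.reflection (x := a) (f := (2 : R) • B a) (by simp [ha])

lemma unitReflection_apply {a : M} (ha : B a a = 1) (u : M) :
    unitReflection B ha u = u - (2 * B a u) • a := by
  simp [unitReflection, Module.reflection_apply]

lemma unitReflection_apply_self {a : M} (ha : B a a = 1) : unitReflection B ha a = -a :=
  Module.reflection_apply_self _

lemma unitReflection_inv {a : M} (ha : B a a = 1) :
    (unitReflection B ha)⁻¹ = unitReflection B ha :=
  Module.reflection_inv _

lemma bilin_unitReflection (hB : B.IsSymm) {a : M} (ha : B a a = 1) (u v : M) :
    B (unitReflection B ha u) (unitReflection B ha v) = B u v := by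
  simp only [unitReflection_apply, map_sub, map_smul, LinearMap.sub_apply, LinearMap.smul_apply,
    smul_eq_mul, ha, hB.eq u a]
  ring

lemma unitReflection_map {w : M ≃ₗ[R] M} (hw : ∀ u v, B (w u) (w v) = B u v) {a : M}
    (ha : B a a = 1) (hwa : B (w a) (w a) = 1) :
    unitReflection B hwa = w * unitReflection B ha * w⁻¹ := by
  ext u
  obtain ⟨v, rfl⟩ := w.surjective u
  have hinv : w⁻¹ (w v) = v := w.symm_apply_apply v
  simp only [LinearEquiv.mul_apply, hinv, unitReflection_apply, hw, map_sub, map_smul]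

variable {a b : M} {c : R}

lemma unitReflection_mul_pow_apply (hB : B.IsSymm) (ha : B a a = 1) (hb : B b b = 1)
    (hab : B a b = -c) (n : ℕ) :
    ((unitReflection B ha * unitReflection B hb) ^ n) a =
      (U R (2 * n)).eval c • a + (U R (2 * n - 1)).eval c • b := by
  induction n with
  | zero => simp
  | succ n ih =>
    have hodd : (U R (2 * n + 1)).eval c =
        2 * c * (U R (2 * n)).eval c - (U R (2 * n - 1)).eval c := by
      simp [U_add_one]
    have heven : (U R (2 * (n + 1))).eval c =
        2 * c * (U R (2 * n + 1)).eval c - (U R (2 * n)).eval c := by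
      simp [mul_add, U_add_two]
    have hidx : (2 * (n + 1) - 1 : ℤ) = 2 * n + 1 := by ring
    push_cast
    rw [pow_succ', LinearEquiv.mul_apply, ih, heven, hidx, hodd]
    simp only [LinearEquiv.mul_apply, unitReflection_apply, map_add, map_sub, map_smul, ha, hb, hab,
      hB.eq b a]
    module

lemma unitReflection_mul_unitReflection_mul_pow_apply (hB : B.IsSymm) (ha : B a a = 1)
    (hb : B b b = 1) (hab : B a b = -c) (n : ℕ) :
    (unitReflection B hb * (unitReflection B ha * unitReflection B hb) ^ n) a =
      (U R (2 * n)).eval c • a + (U R (2 * n + 1)).eval c • b := by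
  rw [LinearEquiv.mul_apply, unitReflection_mul_pow_apply hB ha hb hab, U_add_one]
  simp only [unitReflection_apply, map_add, map_smul, hb, hB.eq b a, hab,
    Polynomial.eval_sub, Polynomial.eval_mul, Polynomial.eval_ofNat, Polynomial.eval_X]
  module

lemma unitReflection_mul_pow_apply_of_orthogonal (ha : B a a = 1) (hb : B b b = 1) {z : M}
    (haz : B a z = 0) (hbz : B b z = 0) (n : ℕ) :
    ((unitReflection B ha * unitReflection B hb) ^ n) z = z := by
  induction n with
  | zero => rfl
  | succ n ih => simp [pow_succ', ih, unitReflection_apply, haz, hbz]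

end UnitReflection

section DihedralOrder

lemma exists_eq_add_orthogonal {K E : Type*} [Field K] [AddCommGroup E] [Module K E]
    {B : LinearMap.BilinForm K E} (hB : B.IsSymm) {a b : E} (ha : B a a = 1)
    (hb : B b b = 1) (hab : B a b ^ 2 ≠ 1) (v : E) :
    ∃ x y : K, ∃ z : E, v = x • a + y • b + z ∧ B a z = 0 ∧ B b z = 0 := by
  have hdet : 1 - B a b ^ 2 ≠ 0 := sub_ne_zero.2 hab.symm
  refine ⟨(B a v - B a b * B b v) / (1 - B a b ^ 2), (B b v - B a b * B a v) / (1 - B a b ^ 2), _,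
    (add_sub_cancel _ v).symm, ?_, ?_⟩ <;>
  · simp only [map_sub, map_add, map_smul, smul_eq_mul, ha, hb, hB.eq b a]
    field_simp
    ring

lemma sin_pi_div_natCast_pos {k : ℕ} (hk : 2 ≤ k) : 0 < Real.sin (Real.pi / k) :=
  Real.sin_pos_of_pos_of_lt_pi (by positivity) (div_lt_self Real.pi_pos (by exact_mod_cast hk))

variable {E : Type*} [AddCommGroup E] [Module ℝ E] {B : LinearMap.BilinForm ℝ E} {a b : E} {k : ℕ}

lemma unitReflection_mul_pow_apply_eq_self (hB : B.IsSymm) (ha : B a a = 1) (hb : B b b = 1)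
    (hk : 2 ≤ k) (hab : B a b = -Real.cos (Real.pi / k)) :
    ((unitReflection B ha * unitReflection B hb) ^ k) a = a := by
  have hk0 : (k : ℝ) ≠ 0 := by positivity
  have hsin := (sin_pi_div_natCast_pos hk).ne'
  have heven : (U ℝ (2 * k)).eval (Real.cos (Real.pi / k)) = 1 := by
    refine mul_right_cancel₀ hsin ?_
    rw [U_real_cos, one_mul, ← Real.sin_add_two_pi (Real.pi / k)]
    congr 1; push_cast; field_simp; ring
  have hodd : (U ℝ (2 * k - 1)).eval (Real.cos (Real.pi / k)) = 0 := by
    refine mul_right_cancel₀ hsin ?_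
    rw [U_real_cos, zero_mul, ← Real.sin_two_pi]
    congr 1; push_cast; field_simp; ring
  rw [unitReflection_mul_pow_apply hB ha hb hab, heven, hodd, one_smul, zero_smul, add_zero]

theorem unitReflection_mul_pow_eq_one (hB : B.IsSymm) (ha : B a a = 1) (hb : B b b = 1)
    (hk : 2 ≤ k) (hab : B a b = -Real.cos (Real.pi / k)) :
    (unitReflection B ha * unitReflection B hb) ^ k = 1 := by
  have hfix_a := unitReflection_mul_pow_apply_eq_self hB ha hb hk hab
  have hfix_b : ((unitReflection B ha * unitReflection B hb) ^ k) b = b := by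
    have h := unitReflection_mul_pow_apply_eq_self hB hb ha hk ((hB.eq b a).trans hab)
    rw [← unitReflection_inv ha, ← unitReflection_inv hb, ← mul_inv_rev, inv_pow] at h
    exact ((LinearEquiv.symm_apply_eq _).1 h).symm
  have hsin := sin_pi_div_natCast_pos hk
  have hdet : B a b ^ 2 ≠ 1 := by
    rw [hab]; nlinarith [Real.sin_sq_add_cos_sq (Real.pi / k)]
  ext v
  obtain ⟨x, y, z, rfl, haz, hbz⟩ := exists_eq_add_orthogonal hB ha hb hdet v
  simp only [map_add, map_smul, hfix_a, hfix_b,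
    unitReflection_mul_pow_apply_of_orthogonal ha hb haz hbz, LinearEquiv.coe_one, id]

end DihedralOrder

section CoxeterLength

variable {I W : Type*} [Group W] {M : CoxeterMatrix I} (cs : CoxeterSystem M W)

lemma length_add_ne_of_not_isRightDescent {v w : W} {i j : I} (hi : ¬cs.IsRightDescent w i)
    (hM : M i j ≠ 0) (hw : w = v * cs.wordProd (alternatingWord i j (M i j))) :
    cs.length w ≠ cs.length v + M i j := by
  obtain ⟨m, hm⟩ := Nat.exists_eq_succ_of_ne_zero hM
  have hbraid : cs.wordProd (alternatingWord i j (M i j)) =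
      cs.wordProd (alternatingWord i j m) * cs.simple i := by
    have h := cs.wordProd_braidWord_eq i j
    rw [braidWord, braidWord, M.symmetric j i] at h
    rw [h, hm, alternatingWord_succ, wordProd_concat]
  -- By the braid relation `w * s i` is `v` times an alternating word of only `M i j - 1` letters.
  have hle : cs.length (w * cs.simple i) ≤ cs.length v + m := by
    rw [hw, hbraid, ← mul_assoc, simple_mul_simple_cancel_right]
    refine (cs.length_mul_le _ _).trans (Nat.add_le_add_left ?_ _)
    simpa using cs.length_wordProd_le (alternatingWord i j m)
  have := (cs.not_isRightDescent_iff).1 hi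
  lia

theorem exists_eq_mul_alternatingWord {w : W} {i : I} (hi : ¬cs.IsRightDescent w i) (j : I) :
    ∃ (v : W) (n : ℕ), w = v * cs.wordProd (alternatingWord i j n) ∧
      cs.length w = cs.length v + n ∧ ¬cs.IsRightDescent v i ∧ ¬cs.IsRightDescent v j ∧
      (M i j = 0 ∨ n < M i j) := by
  classical
  -- Strip the letters `j, i, j, …` off the right end of `w` as long as each one lowers the length.
  let v (n : ℕ) : W := w * (cs.wordProd (alternatingWord i j n))⁻¹
  have hv_succ (n : ℕ) : v (n + 1) = v n * cs.simple (if Even n then j else i) := by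
    simp [v, alternatingWord_succ', wordProd_cons, mul_assoc]
  have hbound : ∃ n, cs.length w ≠ cs.length (v (n + 1)) + (n + 1) :=
    ⟨cs.length w, by lia⟩
  let n := Nat.find hbound
  have hlen (m : ℕ) (hm : m ≤ n) : cs.length w = cs.length (v m) + m := by
    cases m with
    | zero => simp [v, alternatingWord]
    | succ m => exact not_not.1 (Nat.find_min hbound hm)
  have hnext : ¬cs.IsRightDescent (v n) (if Even n then j else i) := fun h ↦
    Nat.find_spec hbound <| by
      have := hlen n le_rfl
      rw [cs.isRightDescent_iff, ← hv_succ] at h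
      lia
  have hprev : ¬cs.IsRightDescent (v n) (if Even n then i else j) := by
    rcases hn : n with _ | m
    · simpa [v, alternatingWord] using hi
    · have hm : v (m + 1) * cs.simple (if Even (m + 1) then i else j) = v m := by
        by_cases h : Even m <;> simp [hv_succ, Nat.even_add_one, h]
      have := hlen (m + 1) hn.ge
      have := hlen m (by lia)
      rw [cs.not_isRightDescent_iff, hm]
      lia
  refine ⟨v n, n, by simp [v], hlen n le_rfl, ?_, ?_, ?_⟩
  · by_cases h : Even n <;> simp_all
  · by_cases h : Even n <;> simp_all
  · by_contra! h
    exact length_add_ne_of_not_isRightDescent cs hi h.1 (by simp [v]) (hlen _ h.2)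

end CoxeterLength

/-- A basis is a simple system for the symmetric form `B` if its vectors are `B`-unit and their
pairwise products are those allowed for simple roots: at most `-1`, or `-cos (π / k)` with `2 ≤ k`.
-/
structure IsSimpleSystem {I E : Type*} [AddCommGroup E] [Module ℝ E] (B : LinearMap.BilinForm ℝ E)
    (Δ : Module.Basis I ℝ E) : Prop where
  isSymm : B.IsSymm
  unit (i : I) : B (Δ i) (Δ i) = 1
  offDiag (i j : I) : i ≠ j → B (Δ i) (Δ j) ≤ -1 ∨
    ∃ k : ℕ, 2 ≤ k ∧ B (Δ i) (Δ j) = -Real.cos (Real.pi / k)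

namespace IsSimpleSystem

variable {I E : Type*} [AddCommGroup E] [Module ℝ E] {B : LinearMap.BilinForm ℝ E}
  {Δ : Module.Basis I ℝ E}

lemma bilin_ne_one (h : IsSimpleSystem B Δ) {i j : I} (hij : i ≠ j) : B (Δ i) (Δ j) ≠ 1 := by
  rcases h.offDiag i j hij with hle | ⟨k, hk, hcos⟩
  · linarith
  · rw [hcos]
    nlinarith [sin_pi_div_natCast_pos hk, Real.sin_sq_add_cos_sq (Real.pi / k)]

/-- The Coxeter matrix of a simple system. The exponent `k` of a pair is read off from
`B (Δ i) (Δ j) = -cos (π / k)`, the case `k = 1` being the diagonal one; when there is no such `k`,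
the junk value `sInf ∅ = 0` is the entry which encodes an infinite order. -/
def coxeterMatrix (h : IsSimpleSystem B Δ) : CoxeterMatrix I where
  M i j := sInf {k : ℕ | 1 ≤ k ∧ B (Δ i) (Δ j) = -Real.cos (Real.pi / k)}
  isSymm := Matrix.IsSymm.ext fun i j ↦ by simp only [h.isSymm.eq (Δ i) (Δ j)]
  diagonal i := le_antisymm (Nat.sInf_le (by simp [h.unit]))
    (le_csInf ⟨1, by simp [h.unit]⟩ fun _ hk ↦ hk.1)
  off_diagonal i j hij h1 := by
    have hmem := Nat.sInf_mem (Nat.nonempty_of_sInf_eq_succ h1)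
    rw [h1] at hmem
    exact h.bilin_ne_one hij (by simpa using hmem.2)

lemma bilin_le_of_coxeterMatrix_eq_zero (h : IsSimpleSystem B Δ) {i j : I} (hij : i ≠ j)
    (hM : h.coxeterMatrix i j = 0) : B (Δ i) (Δ j) ≤ -1 := by
  refine (h.offDiag i j hij).resolve_right fun ⟨k, hk, hcos⟩ ↦ ?_
  rcases Nat.sInf_eq_zero.1 hM with h0 | hempty
  · exact absurd h0.1 (by lia)
  · exact (Set.eq_empty_iff_forall_notMem.1 hempty k) ⟨by lia, hcos⟩

lemma bilin_eq_of_coxeterMatrix_ne_zero (h : IsSimpleSystem B Δ) {i j : I}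
    (hM : h.coxeterMatrix i j ≠ 0) :
    B (Δ i) (Δ j) = -Real.cos (Real.pi / h.coxeterMatrix i j) :=
  (Nat.sInf_mem (Nat.nonempty_of_pos_sInf (Nat.pos_of_ne_zero hM))).2

lemma two_le_coxeterMatrix (h : IsSimpleSystem B Δ) {i j : I} (hij : i ≠ j)
    (hM : h.coxeterMatrix i j ≠ 0) : 2 ≤ h.coxeterMatrix i j := by
  have := h.coxeterMatrix.off_diagonal i j hij
  lia

lemma isLiftable_unitReflection (h : IsSimpleSystem B Δ) :
    h.coxeterMatrix.IsLiftable fun i ↦ unitReflection B (h.unit i) := by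
  intro i j
  rcases eq_or_ne i j with rfl | hij
  · rw [h.coxeterMatrix.diagonal, pow_one, mul_eq_one_iff_eq_inv, unitReflection_inv]
  by_cases hM : h.coxeterMatrix i j = 0
  · rw [hM, pow_zero]
  · exact unitReflection_mul_pow_eq_one h.isSymm (h.unit i) (h.unit j)
      (h.two_le_coxeterMatrix hij hM) (h.bilin_eq_of_coxeterMatrix_ne_zero hM)

/-- The geometric representation of the abstract Coxeter group of a simple system, in which the
simple generators act as the reflections in the simple roots. -/
def geometricRep (h : IsSimpleSystem B Δ) : h.coxeterMatrix.Group →* (E ≃ₗ[ℝ] E) :=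
  h.coxeterMatrix.toCoxeterSystem.lift ⟨_, h.isLiftable_unitReflection⟩

lemma geometricRep_simple (h : IsSimpleSystem B Δ) (i : I) :
    h.geometricRep (h.coxeterMatrix.toCoxeterSystem.simple i) = unitReflection B (h.unit i) :=
  lift_apply_simple _ h.isLiftable_unitReflection i

lemma eval_U_nonneg (h : IsSimpleSystem B Δ) {i j : I} (hij : i ≠ j) {n : ℕ}
    (hn : h.coxeterMatrix i j = 0 ∨ n < h.coxeterMatrix i j) {m : ℤ} (hm : -1 ≤ m) (hmn : m ≤ n) :
    0 ≤ (U ℝ m).eval (-B (Δ i) (Δ j)) := by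
  by_cases hM : h.coxeterMatrix i j = 0
  · have hB := h.bilin_le_of_coxeterMatrix_eq_zero hij hM
    lift m + 1 to ℕ using by lia with k hk
    rw [eq_sub_of_add_eq hk.symm]
    exact (eval_U_sub_one_nonneg_and_le (by linarith) k).1
  · have hk := h.two_le_coxeterMatrix hij hM
    have hm' : (m + 1 : ℝ) ≤ h.coxeterMatrix i j := by exact_mod_cast (by lia)
    rw [h.bilin_eq_of_coxeterMatrix_ne_zero hM, neg_neg]
    refine eval_U_cos_nonneg (by positivity)
      (div_lt_self Real.pi_pos (by exact_mod_cast hk)) hm ?_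
    rw [mul_div_assoc', div_le_iff₀ (by positivity)]
    nlinarith [Real.pi_pos]

lemma exists_geometricRep_alternatingWord_eq (h : IsSimpleSystem B Δ) {i j : I} (hij : i ≠ j)
    {n : ℕ} (hn : h.coxeterMatrix i j = 0 ∨ n < h.coxeterMatrix i j) :
    ∃ p q : ℝ, 0 ≤ p ∧ 0 ≤ q ∧ h.geometricRep
      (h.coxeterMatrix.toCoxeterSystem.wordProd (alternatingWord i j n)) (Δ i) =
        p • Δ i + q • Δ j := by
  have hab : B (Δ i) (Δ j) = -(-B (Δ i) (Δ j)) := (neg_neg _).symm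
  rw [prod_alternatingWord_eq_mul_pow]
  rcases n.even_or_odd' with ⟨m, rfl | rfl⟩
  · refine ⟨_, _, h.eval_U_nonneg hij hn (m := 2 * m) (by lia) (by simp),
      h.eval_U_nonneg hij hn (m := 2 * m - 1) (by lia) (by simp), ?_⟩
    rw [if_pos (even_two_mul m), one_mul, Nat.mul_div_cancel_left _ two_pos, map_pow, map_mul,
      geometricRep_simple, geometricRep_simple]
    exact unitReflection_mul_pow_apply h.isSymm (h.unit i) (h.unit j) hab m
  · refine ⟨_, _, h.eval_U_nonneg hij hn (m := 2 * m) (by lia) (by simp),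
      h.eval_U_nonneg hij hn (m := 2 * m + 1) (by lia) (by simp), ?_⟩
    rw [if_neg (Nat.not_even_two_mul_add_one m), show (2 * m + 1) / 2 = m by lia, map_mul, map_pow,
      map_mul, geometricRep_simple, geometricRep_simple]
    exact unitReflection_mul_unitReflection_mul_pow_apply h.isSymm (h.unit i) (h.unit j) hab m

theorem repr_geometricRep_nonneg (h : IsSimpleSystem B Δ) {w : h.coxeterMatrix.Group} {i : I}
    (hi : ¬h.coxeterMatrix.toCoxeterSystem.IsRightDescent w i) :
    0 ≤ Δ.repr (h.geometricRep w (Δ i)) := by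
  set cs := h.coxeterMatrix.toCoxeterSystem
  induction hl : cs.length w using Nat.strong_induction_on generalizing w i with
  | _ l ih =>
    rcases eq_or_ne w 1 with rfl | hw
    · simp
    obtain ⟨j, hj⟩ := cs.exists_rightDescent_of_ne_one hw
    have hij : i ≠ j := fun hij ↦ hi (hij ▸ hj)
    obtain ⟨v, n, rfl, hlen, hvi, hvj, hn⟩ := exists_eq_mul_alternatingWord cs hi j
    have hn0 : n ≠ 0 := by
      rintro rfl
      simp [alternatingWord, hvj] at hj
    obtain ⟨p, q, hp, hq, hpq⟩ := h.exists_geometricRep_alternatingWord_eq hij hn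
    rw [map_mul, LinearEquiv.mul_apply, hpq]
    simp only [map_add, map_smul]
    exact add_nonneg (smul_nonneg hp (ih _ (by lia) hvi rfl))
      (smul_nonneg hq (ih _ (by lia) hvj rfl))

theorem repr_geometricRep_nonneg_or_nonpos (h : IsSimpleSystem B Δ) (w : h.coxeterMatrix.Group)
    (i : I) : 0 ≤ Δ.repr (h.geometricRep w (Δ i)) ∨ Δ.repr (h.geometricRep w (Δ i)) ≤ 0 := by
  set cs := h.coxeterMatrix.toCoxeterSystem
  by_cases hi : cs.IsRightDescent w i
  · have hpos := h.repr_geometricRep_nonneg ((cs.isRightDescent_iff_not_isRightDescent_mul).1 hi)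
    rw [map_mul, LinearEquiv.mul_apply, geometricRep_simple, unitReflection_apply_self] at hpos
    exact Or.inr (by simpa using hpos)
  · exact Or.inl (h.repr_geometricRep_nonneg hi)

end IsSimpleSystem

section IsotropicPlane

open scoped Pointwise

variable {E : Type*} [AddCommGroup E] [Module ℝ E] {Φ : Set E}

lemma exists_add_smul_mem_univ_smul {T : E →ₗ[ℝ] E} (hT : Set.MapsTo T Φ Φ) {r x : E} (hr : r ∈ Φ)
    {μ k : ℝ} (hμ : 1 ≤ μ) (hx : T x = μ • x) (hTr : μ • T r = r + k • x) (n : ℕ) :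
    ∃ a : ℝ, n ≤ a ∧ r + (a * k) • x ∈ (Set.univ : Set ℝ) • Φ := by
  induction n with
  | zero => exact ⟨0, by simp, 1, trivial, r, hr, by simp⟩
  | succ n ih =>
    obtain ⟨a, hna, c, -, β, hβ, hc : c • β = _⟩ := ih
    have ha : 0 ≤ a := n.cast_nonneg.trans hna
    have haμ : a ≤ μ ^ 2 * a := le_mul_of_one_le_left ha (one_le_pow₀ hμ)
    refine ⟨1 + μ ^ 2 * a, by push_cast; linarith, μ * c, trivial, T β, hT hβ, ?_⟩
    calc (μ * c) • T β = μ • T (c • β) := by rw [map_smul, mul_smul]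
      _ = μ • T r + (a * k) • μ • T x := by
        rw [hc, map_add, map_smul, smul_add, smul_comm μ (a * k)]
      _ = r + ((1 + μ ^ 2 * a) * k) • x := by rw [hTr, hx]; module

variable [TopologicalSpace E] [ContinuousAdd E] [ContinuousSMul ℝ E]

lemma mem_closure_univ_smul_of_map_eq_smul {T : E →ₗ[ℝ] E} (hT : Set.MapsTo T Φ Φ) {r x : E}
    (hr : r ∈ Φ) {μ k : ℝ} (hμ : 1 ≤ μ) (hk : k ≠ 0) (hx : T x = μ • x)
    (hTr : μ • T r = r + k • x) : x ∈ closure ((Set.univ : Set ℝ) • Φ) := by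
  choose a hna hmem using exists_add_smul_mem_univ_smul hT hr hμ hx hTr
  have ha : Tendsto a atTop atTop := tendsto_atTop_mono hna tendsto_natCast_atTop_atTop
  have hlim : Tendsto (fun n ↦ (k⁻¹ * (a n)⁻¹) • r + x) atTop (𝓝 x) := by
    simpa using (((tendsto_inv_atTop_zero.comp ha).const_mul k⁻¹).smul_const r).add_const x
  refine mem_closure_of_tendsto hlim ?_
  filter_upwards [ha.eventually_gt_atTop 0] with n hn
  obtain ⟨c, -, β, hβ, hc : c • β = _⟩ := hmem n
  refine ⟨k⁻¹ * (a n)⁻¹ * c, trivial, β, hβ, ?_⟩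
  change (k⁻¹ * (a n)⁻¹ * c) • β = _
  rw [mul_smul, hc, smul_add, smul_smul, show k⁻¹ * (a n)⁻¹ * (a n * k) = 1 by field_simp, one_smul]

theorem mem_closure_univ_smul_of_isotropic {B : LinearMap.BilinForm ℝ E} (hB : B.IsSymm) {r s x : E}
    (hr : r ∈ Φ) (hs : s ∈ Φ) (hrr : B r r = 1) (hss : B s s = 1)
    (hΦr : Set.MapsTo (unitReflection B hrr) Φ Φ) (hΦs : Set.MapsTo (unitReflection B hss) Φ Φ)
    (hx : x ∈ Submodule.span ℝ {r, s}) (hxx : B x x = 0) :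
    x ∈ closure ((Set.univ : Set ℝ) • Φ) := by
  obtain ⟨p, q, rfl⟩ := Submodule.mem_span_pair.1 hx
  wlog hpq : q ^ 2 ≤ p ^ 2 generalizing p q r s
  · rw [add_comm] at hxx ⊢
    exact this hs hr hss hrr hΦs hΦr q p (Submodule.mem_span_pair.2 ⟨q, p, rfl⟩) hxx (by linarith)
  have hquad : p ^ 2 + 2 * p * q * B r s + q ^ 2 = 0 := by
    simp only [map_add, map_smul, LinearMap.add_apply, LinearMap.smul_apply, smul_eq_mul, hrr, hss,
      hB.eq s r] at hxx
    linarith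
  rcases eq_or_ne q 0 with rfl | hq
  · obtain rfl : p = 0 := by simpa using hquad
    exact subset_closure ⟨0, trivial, r, hr, by simp⟩
  have hp : p ≠ 0 := by
    rintro rfl
    exact hq (by simpa using hquad)
  have hrs : B r s = -(p ^ 2 + q ^ 2) / (2 * p * q) := by
    field_simp
    linarith
  have hT : Set.MapsTo (unitReflection B hrr * unitReflection B hss).toLinearMap Φ Φ :=
    hΦr.comp hΦs
  have hpq2 : p ^ 2 + q ^ 2 ≠ 0 := by positivity
  -- For isotropic `x = p r + q s` each of the two reflections swaps `x` and `q r + p s` up to a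
  -- scalar, which makes `x` an eigenvector of their product, with eigenvalue `(p / q) ^ 2`.
  refine mem_closure_univ_smul_of_map_eq_smul hT hr (μ := p ^ 2 / q ^ 2)
    (k := p * (p ^ 2 + q ^ 2) / q ^ 4) ((one_le_div (by positivity)).2 hpq) (by positivity) ?_ ?_
  all_goals
    simp only [LinearEquiv.coe_coe, LinearEquiv.mul_apply, unitReflection_apply, map_add, map_sub,
      map_smul, hrr, hss, hB.eq s r, hrs]
    match_scalars <;> field_simp <;> ring

end IsotropicPlane

section Roots

omit [Fintype ι]

variable {B : LinearMap.BilinForm ℝ V} {Δ : Module.Basis ι ℝ V}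

lemma simpleReflections_eq_range (hdiag : ∀ i, B (Δ i) (Δ i) = 1) :
    simpleReflections B Δ = Set.range fun i ↦ unitReflection B (hdiag i) := by
  ext e
  simp [simpleReflections, LinearEquiv.ext_iff, unitReflection_apply, hdiag, eq_comm]

lemma bilin_apply_of_mem_cox (hB : B.IsSymm) (hdiag : ∀ i, B (Δ i) (Δ i) = 1) {w : V ≃ₗ[ℝ] V}
    (hw : w ∈ cox B Δ) : ∀ u v, B (w u) (w v) = B u v := by
  rw [cox, simpleReflections_eq_range hdiag] at hw
  induction hw using Subgroup.closure_induction with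
  | mem _ he =>
    obtain ⟨i, rfl⟩ := he
    exact bilin_unitReflection hB (hdiag i)
  | one => exact fun _ _ ↦ rfl
  | mul w₁ w₂ _ _ h₁ h₂ => exact fun u v ↦ (h₁ _ _).trans (h₂ u v)
  | inv w _ h =>
    intro u v
    rw [← h, show w (w⁻¹ u) = u from w.apply_symm_apply u,
      show w (w⁻¹ v) = v from w.apply_symm_apply v]

lemma apply_mem_Phi {w : V ≃ₗ[ℝ] V} (hw : w ∈ cox B Δ) {r : V} (hr : r ∈ Phi B Δ) :
    w r ∈ Phi B Δ := by
  obtain ⟨w', hw', i, rfl⟩ := hr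
  exact ⟨w * w', mul_mem hw hw', i, rfl⟩

lemma bilin_self_of_mem_Phi (hB : B.IsSymm) (hdiag : ∀ i, B (Δ i) (Δ i) = 1) {r : V}
    (hr : r ∈ Phi B Δ) : B r r = 1 := by
  obtain ⟨w, hw, i, rfl⟩ := hr
  rw [bilin_apply_of_mem_cox hB hdiag hw, hdiag]

lemma unitReflection_mem_cox (hB : B.IsSymm) (hdiag : ∀ i, B (Δ i) (Δ i) = 1) {r : V}
    (hr : r ∈ Phi B Δ) : unitReflection B (bilin_self_of_mem_Phi hB hdiag hr) ∈ cox B Δ := by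
  obtain ⟨w, hw, i, rfl⟩ := hr
  rw [unitReflection_map (bilin_apply_of_mem_cox hB hdiag hw) (hdiag i)]
  have hi : unitReflection B (hdiag i) ∈ cox B Δ :=
    Subgroup.subset_closure ((simpleReflections_eq_range hdiag).ge ⟨i, rfl⟩)
  exact mul_mem (mul_mem hw hi) (inv_mem hw)

lemma neg_mem_Phi (hB : B.IsSymm) (hdiag : ∀ i, B (Δ i) (Δ i) = 1) {r : V} (hr : r ∈ Phi B Δ) :
    -r ∈ Phi B Δ := by
  rw [← unitReflection_apply_self (bilin_self_of_mem_Phi hB hdiag hr)]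
  exact apply_mem_Phi (unitReflection_mem_cox hB hdiag hr) hr

namespace IsSimpleSystem

lemma cox_eq_range (h : IsSimpleSystem B Δ) : cox B Δ = h.geometricRep.range := by
  rw [cox, simpleReflections_eq_range h.unit, MonoidHom.range_eq_map,
    ← h.coxeterMatrix.toCoxeterSystem.subgroup_closure_range_simple, MonoidHom.map_closure,
    ← Set.range_comp]
  simp only [Function.comp_def, geometricRep_simple]

theorem repr_nonneg_or_nonpos (h : IsSimpleSystem B Δ) {r : V} (hr : r ∈ Phi B Δ) :
    0 ≤ Δ.repr r ∨ Δ.repr r ≤ 0 := by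
  obtain ⟨w, hw, i, rfl⟩ := hr
  obtain ⟨w, rfl⟩ := h.cox_eq_range.le hw
  exact h.repr_geometricRep_nonneg_or_nonpos w i

lemma mem_posPhi_or_neg_mem_posPhi (h : IsSimpleSystem B Δ) {r : V} (hr : r ∈ Phi B Δ) :
    r ∈ posPhi B Δ ∨ -r ∈ posPhi B Δ :=
  (h.repr_nonneg_or_nonpos hr).imp (fun hpos ↦ ⟨hr, hpos⟩)
    fun hneg ↦ ⟨neg_mem_Phi h.isSymm h.unit hr, fun i ↦ by simpa using hneg i⟩

lemma exists_mem_posPhi_span_singleton_eq (h : IsSimpleSystem B Δ) {r : V} (hr : r ∈ Phi B Δ) :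
    ∃ ρ ∈ posPhi B Δ, Submodule.span ℝ {r} = Submodule.span ℝ {ρ} := by
  rcases h.mem_posPhi_or_neg_mem_posPhi hr with hpos | hneg
  · exact ⟨r, hpos, rfl⟩
  · exact ⟨-r, hneg, by rw [← Set.neg_singleton, Submodule.span_neg]⟩

end IsSimpleSystem

end Roots

section Normalization

variable {B : LinearMap.BilinForm ℝ V} {Δ : Module.Basis ι ℝ V}

lemma l1_eq_sumCoords (Δ : Module.Basis ι ℝ V) : l1 Δ = Δ.sumCoords := by
  rw [Module.Basis.coe_sumCoords_of_fintype]
  ext v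
  simp [l1]

lemma l1_smul (Δ : Module.Basis ι ℝ V) (c : ℝ) (v : V) : l1 Δ (c • v) = c * l1 Δ v := by
  simp [l1_eq_sumCoords]

lemma l1_basis (Δ : Module.Basis ι ℝ V) (i : ι) : l1 Δ (Δ i) = 1 := by
  simp [l1_eq_sumCoords]

lemma continuous_l1 (Δ : Module.Basis ι ℝ V) : Continuous (l1 Δ) := by
  have := Module.Finite.of_basis Δ
  rw [l1_eq_sumCoords]
  exact LinearMap.continuous_of_finiteDimensional _

lemma l1_ne_zero_of_repr_nonneg_or_nonpos {v : V} (hv : v ≠ 0)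
    (hsign : 0 ≤ Δ.repr v ∨ Δ.repr v ≤ 0) : l1 Δ v ≠ 0 := by
  contrapose! hv
  refine Δ.ext_elem fun i ↦ ?_
  rcases hsign with hpos | hneg
  · simpa using (Finset.sum_eq_zero_iff_of_nonneg fun i _ ↦ hpos i).1 hv i (Finset.mem_univ i)
  · simpa using (Finset.sum_eq_zero_iff_of_nonpos fun i _ ↦ hneg i).1 hv i (Finset.mem_univ i)

omit [Fintype ι] in
lemma isClosed_repr_nonneg_or_nonpos [Finite ι] (Δ : Module.Basis ι ℝ V) :
    IsClosed {v | 0 ≤ Δ.repr v ∨ Δ.repr v ≤ 0} := by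
  have := Module.Finite.of_basis Δ
  have hcont (i : ι) : Continuous fun v ↦ Δ.repr v i :=
    (Δ.coord i).continuous_of_finiteDimensional
  simp only [Finsupp.le_def, Set.ofPred_or, Set.ofPred_forall]
  exact (isClosed_iInter fun i ↦ isClosed_le continuous_const (hcont i)).union
    (isClosed_iInter fun i ↦ isClosed_le (hcont i) continuous_const)

lemma nrm_smul {c : ℝ} (hc : c ≠ 0) (v : V) : nrm Δ (c • v) = nrm Δ v := by
  rw [nrm, nrm, l1_smul, smul_smul, mul_inv_rev, inv_mul_cancel_right₀ hc]

lemma l1_nrm {v : V} (hv : l1 Δ v ≠ 0) : l1 Δ (nrm Δ v) = 1 := by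
  rw [nrm, l1_smul, inv_mul_cancel₀ hv]

lemma nrm_eq_self {v : V} (hv : l1 Δ v = 1) : nrm Δ v = v := by
  rw [nrm, hv, inv_one, one_smul]

lemma nrm_map_nrm {v : V} (hv : l1 Δ v ≠ 0) (T : V ≃ₗ[ℝ] V) :
    nrm Δ (T (nrm Δ v)) = nrm Δ (T v) := by
  rw [nrm.eq_1 Δ v, map_smul, nrm_smul (inv_ne_zero hv)]

lemma continuousAt_nrm {v : V} (hv : l1 Δ v ≠ 0) : ContinuousAt (nrm Δ) v :=
  ((continuous_l1 Δ).continuousAt.inv₀ hv).smul continuousAt_id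

lemma mem_lineThrough_nrm_iff {a b x : V} (ha : l1 Δ a ≠ 0) (hb : l1 Δ b ≠ 0) (hx : l1 Δ x = 1) :
    x ∈ lineThrough (nrm Δ a) (nrm Δ b) ↔ x ∈ Submodule.span ℝ {a, b} := by
  rw [Submodule.mem_span_pair]
  constructor
  · rintro ⟨t, rfl⟩
    exact ⟨(1 - t) * (l1 Δ a)⁻¹, t * (l1 Δ b)⁻¹, by simp only [nrm]; module⟩
  · rintro ⟨p, q, rfl⟩
    have hp : p * l1 Δ a = 1 - q * l1 Δ b := by
      simp only [l1_eq_sumCoords, map_add, map_smul, smul_eq_mul] at hx ⊢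
      linarith
    refine ⟨q * l1 Δ b, ?_⟩
    calc p • a + q • b = (p * l1 Δ a) • nrm Δ a + (q * l1 Δ b) • nrm Δ b := by
          rw [nrm, nrm, smul_smul, smul_smul, mul_inv_cancel_right₀ ha, mul_inv_cancel_right₀ hb]
      _ = nrm Δ a + (q * l1 Δ b) • (nrm Δ b - nrm Δ a) := by rw [hp]; module

lemma bilin_nrm_self_ne_zero {v : V} (hv : l1 Δ v ≠ 0) (hvv : B v v = 1) :
    B (nrm Δ v) (nrm Δ v) ≠ 0 := by
  simp [nrm, hv, hvv]

lemma ne_of_mem_lineThrough_of_isotropic {a b x : V} (ha : B a a ≠ 0) (hx : x ∈ lineThrough a b)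
    (hxx : B x x = 0) : a ≠ b := by
  rintro rfl
  obtain ⟨t, rfl⟩ := hx
  exact ha (by simpa using hxx)

end Normalization

section DihedralLimit

variable {B : LinearMap.BilinForm ℝ V} {Δ : Module.Basis ι ℝ V} {x : V}

/-- An isotropic vector in the span of two roots. The points of `E₂` are the normalized vectors of
this kind, and unlike `E₂` itself this condition is invariant under scalars and under the linear
action of the Coxeter group. -/
def IsDihedralIsotropic (B : LinearMap.BilinForm ℝ V) (Δ : Module.Basis ι ℝ V) (x : V) : Prop :=
  B x x = 0 ∧ ∃ r ∈ Phi B Δ, ∃ s ∈ Phi B Δ, x ∈ Submodule.span ℝ {r, s}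

namespace IsDihedralIsotropic

open scoped Pointwise

section

omit [Fintype ι]

lemma smul (hx : IsDihedralIsotropic B Δ x) (c : ℝ) : IsDihedralIsotropic B Δ (c • x) := by
  obtain ⟨hxx, r, hr, s, hs, hspan⟩ := hx
  exact ⟨by simp [hxx], r, hr, s, hs, Submodule.smul_mem _ c hspan⟩

lemma map (hx : IsDihedralIsotropic B Δ x) (hB : B.IsSymm) (hdiag : ∀ i, B (Δ i) (Δ i) = 1)
    {w : V ≃ₗ[ℝ] V} (hw : w ∈ cox B Δ) : IsDihedralIsotropic B Δ (w x) := by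
  obtain ⟨hxx, r, hr, s, hs, hspan⟩ := hx
  refine ⟨(bilin_apply_of_mem_cox hB hdiag hw x x).trans hxx, w r, apply_mem_Phi hw hr, w s,
    apply_mem_Phi hw hs, ?_⟩
  simpa [Set.image_pair] using Submodule.apply_mem_span_image_of_mem_span w.toLinearMap hspan

lemma mem_closure_univ_smul_Phi (hx : IsDihedralIsotropic B Δ x) (hB : B.IsSymm)
    (hdiag : ∀ i, B (Δ i) (Δ i) = 1) : x ∈ closure ((Set.univ : Set ℝ) • Phi B Δ) := by
  obtain ⟨hxx, r, hr, s, hs, hspan⟩ := hx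
  have hstable {t : V} (ht : t ∈ Phi B Δ) :
      Set.MapsTo (unitReflection B (bilin_self_of_mem_Phi hB hdiag ht)) (Phi B Δ) (Phi B Δ) :=
    fun _ ↦ apply_mem_Phi (unitReflection_mem_cox hB hdiag ht)
  exact mem_closure_univ_smul_of_isotropic hB hr hs _ _ (hstable hr) (hstable hs) hspan hxx

lemma repr_nonneg_or_nonpos [Finite ι] (hx : IsDihedralIsotropic B Δ x) (h : IsSimpleSystem B Δ) :
    0 ≤ Δ.repr x ∨ Δ.repr x ≤ 0 := by
  refine closure_minimal ?_ (isClosed_repr_nonneg_or_nonpos Δ)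
    (hx.mem_closure_univ_smul_Phi h.isSymm h.unit)
  rintro _ ⟨c, -, r, hr, rfl⟩
  have hr' := h.repr_nonneg_or_nonpos hr
  change 0 ≤ Δ.repr (c • r) ∨ Δ.repr (c • r) ≤ 0
  rw [map_smul]
  rcases le_total 0 c with hc | hc
  · exact hr'.imp (smul_nonneg hc) (smul_nonpos_of_nonneg_of_nonpos hc)
  · exact hr'.symm.imp (smul_nonneg_of_nonpos_of_nonpos hc) (smul_nonpos_of_nonpos_of_nonneg hc)

end

lemma l1_ne_zero (hx : IsDihedralIsotropic B Δ x) (h : IsSimpleSystem B Δ) (hx0 : x ≠ 0) :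
    l1 Δ x ≠ 0 :=
  l1_ne_zero_of_repr_nonneg_or_nonpos hx0 (hx.repr_nonneg_or_nonpos h)

end IsDihedralIsotropic

namespace IsSimpleSystem

lemma l1_ne_zero_of_mem_Phi (h : IsSimpleSystem B Δ) {r : V} (hr : r ∈ Phi B Δ) : l1 Δ r ≠ 0 := by
  refine l1_ne_zero_of_repr_nonneg_or_nonpos ?_ (h.repr_nonneg_or_nonpos hr)
  rintro rfl
  simpa using bilin_self_of_mem_Phi h.isSymm h.unit hr

lemma nrm_mem_nPhi (h : IsSimpleSystem B Δ) {r : V} (hr : r ∈ Phi B Δ) : nrm Δ r ∈ nPhi B Δ := by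
  rcases h.mem_posPhi_or_neg_mem_posPhi hr with hpos | hneg
  · exact ⟨r, hpos, rfl⟩
  · exact ⟨-r, hneg, by rw [← neg_one_smul ℝ r, nrm_smul (by norm_num)]⟩

theorem mem_E2_iff (h : IsSimpleSystem B Δ) :
    x ∈ E2 B Δ ↔ IsDihedralIsotropic B Δ x ∧ l1 Δ x = 1 := by
  constructor
  · rintro ⟨r, hr, s, hs, -, hline, hxx, hx⟩
    rw [mem_lineThrough_nrm_iff (h.l1_ne_zero_of_mem_Phi hr.1) (h.l1_ne_zero_of_mem_Phi hs.1) hx]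
      at hline
    exact ⟨⟨hxx, r, hr.1, s, hs.1, hline⟩, hx⟩
  · rintro ⟨⟨hxx, r, hr, s, hs, hspan⟩, hx⟩
    obtain ⟨ρ, hρ, hrρ⟩ := h.exists_mem_posPhi_span_singleton_eq hr
    obtain ⟨σ, hσ, hsσ⟩ := h.exists_mem_posPhi_span_singleton_eq hs
    rw [Submodule.span_insert, hrρ, hsσ, ← Submodule.span_insert, ← mem_lineThrough_nrm_iff
      (h.l1_ne_zero_of_mem_Phi hρ.1) (h.l1_ne_zero_of_mem_Phi hσ.1) hx] at hspan
    have hne := ne_of_mem_lineThrough_of_isotropic (bilin_nrm_self_ne_zero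
      (h.l1_ne_zero_of_mem_Phi hρ.1) (bilin_self_of_mem_Phi h.isSymm h.unit hρ.1)) hspan hxx
    exact ⟨ρ, hρ, σ, hσ, ne_of_apply_ne _ hne, hspan, hxx, hx⟩

theorem mem_E2circ_iff (h : IsSimpleSystem B Δ) : x ∈ E2circ B Δ ↔
    B x x = 0 ∧ l1 Δ x = 1 ∧ ∃ i, ∃ s ∈ Phi B Δ, x ∈ Submodule.span ℝ {Δ i, s} := by
  have hline (i : ι) {s : V} (hs : s ∈ Phi B Δ) (hx : l1 Δ x = 1) :
      x ∈ lineThrough (Δ i) (nrm Δ s) ↔ x ∈ Submodule.span ℝ {Δ i, s} := by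
    rw [← mem_lineThrough_nrm_iff (by simp [l1_basis]) (h.l1_ne_zero_of_mem_Phi hs) hx,
      nrm_eq_self (l1_basis Δ i)]
  constructor
  · rintro ⟨i, s, hs, -, hmem, hxx, hx⟩
    exact ⟨hxx, hx, i, s, hs.1, (hline i hs.1 hx).1 hmem⟩
  · rintro ⟨hxx, hx, i, s, hs, hspan⟩
    obtain ⟨σ, hσ, hsσ⟩ := h.exists_mem_posPhi_span_singleton_eq hs
    rw [Submodule.span_insert, hsσ, ← Submodule.span_insert, ← hline i hσ.1 hx] at hspan
    exact ⟨i, σ, hσ, (ne_of_mem_lineThrough_of_isotropic (by simp [h.unit]) hspan hxx).symm, hspan,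
      hxx, hx⟩

lemma E2circ_subset_E2 (h : IsSimpleSystem B Δ) : E2circ B Δ ⊆ E2 B Δ := fun x hx ↦ by
  obtain ⟨hxx, hx, i, s, hs, hspan⟩ := h.mem_E2circ_iff.1 hx
  exact h.mem_E2_iff.2 ⟨⟨hxx, Δ i, ⟨1, one_mem _, i, rfl⟩, s, hs, hspan⟩, hx⟩

theorem E2_subset_Eset (h : IsSimpleSystem B Δ) : E2 B Δ ⊆ Eset B Δ := fun x hx ↦ by
  obtain ⟨hiso, hx1⟩ := h.mem_E2_iff.1 hx
  have hl1 : l1 Δ x ≠ 0 := by simp [hx1]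
  have hnrm : Tendsto (nrm Δ) (𝓝 x) (𝓝 x) := by
    simpa only [ContinuousAt, nrm_eq_self hx1] using continuousAt_nrm hl1
  have hfreq := mem_closure_iff_frequently.1 (hiso.mem_closure_univ_smul_Phi h.isSymm h.unit)
  refine accPt_iff_frequently.2 (hnrm.frequently ?_)
  refine (hfreq.and_eventually ((continuous_l1 Δ).continuousAt.eventually_ne hl1)).mono ?_
  rintro _ ⟨⟨c, -, r, hr, rfl⟩, hc⟩
  have hc0 : c ≠ 0 := by
    rintro rfl
    simp [l1] at hc
  change nrm Δ (c • r) ≠ x ∧ nrm Δ (c • r) ∈ nPhi B Δ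
  rw [nrm_smul hc0]
  refine ⟨fun hrx ↦ ?_, h.nrm_mem_nPhi hr⟩
  exact bilin_nrm_self_ne_zero (h.l1_ne_zero_of_mem_Phi hr)
    (bilin_self_of_mem_Phi h.isSymm h.unit hr) (hrx ▸ hiso.1)

lemma l1_apply_ne_zero_of_mem_E2 (h : IsSimpleSystem B Δ) (hx : x ∈ E2 B Δ) {w : V ≃ₗ[ℝ] V}
    (hw : w ∈ cox B Δ) : l1 Δ (w x) ≠ 0 := by
  obtain ⟨hiso, hx1⟩ := h.mem_E2_iff.1 hx
  have hx0 : x ≠ 0 := by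
    rintro rfl
    simp [l1] at hx1
  exact (hiso.map h.isSymm h.unit hw).l1_ne_zero h ((map_ne_zero_iff w w.injective).2 hx0)

lemma nrm_apply_mem_E2 (h : IsSimpleSystem B Δ) (hx : x ∈ E2 B Δ) {w : V ≃ₗ[ℝ] V}
    (hw : w ∈ cox B Δ) : nrm Δ (w x) ∈ E2 B Δ :=
  h.mem_E2_iff.2 ⟨((h.mem_E2_iff.1 hx).1.map h.isSymm h.unit hw).smul _,
    l1_nrm (h.l1_apply_ne_zero_of_mem_E2 hx hw)⟩

lemma exists_nrm_apply_mem_E2circ (h : IsSimpleSystem B Δ) (hx : x ∈ E2 B Δ) :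
    ∃ w ∈ cox B Δ, nrm Δ (w x) ∈ E2circ B Δ := by
  obtain ⟨⟨-, r, ⟨w, hw, i, rfl⟩, s, hs, hspan⟩, -⟩ := h.mem_E2_iff.1 hx
  have hw' := inv_mem hw
  obtain ⟨⟨hiso, -⟩, hl1⟩ := h.mem_E2_iff.1 (h.nrm_apply_mem_E2 hx hw')
  refine ⟨w⁻¹, hw', h.mem_E2circ_iff.2 ⟨hiso, hl1, i, w⁻¹ s, apply_mem_Phi hw' hs, ?_⟩⟩
  have hinv : w⁻¹ (w (Δ i)) = Δ i := w.symm_apply_apply _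
  refine Submodule.smul_mem _ _ ?_
  simpa [Set.image_pair, hinv] using
    Submodule.apply_mem_span_image_of_mem_span (w⁻¹).toLinearMap hspan

theorem E2_eq_orbit (h : IsSimpleSystem B Δ) :
    E2 B Δ = {y | ∃ w ∈ cox B Δ, ∃ x ∈ E2circ B Δ, y = nrm Δ (w x)} := by
  refine Set.Subset.antisymm (fun y hy ↦ ?_) ?_
  · obtain ⟨w, hw, hmem⟩ := h.exists_nrm_apply_mem_E2circ hy
    refine ⟨w⁻¹, inv_mem hw, _, hmem, ?_⟩
    rw [nrm_map_nrm (h.l1_apply_ne_zero_of_mem_E2 hy hw),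
      show w⁻¹ (w y) = y from w.symm_apply_apply y, nrm_eq_self (h.mem_E2_iff.1 hy).2]
  · rintro _ ⟨w, hw, x, hx, rfl⟩
    exact h.nrm_apply_mem_E2 (h.E2circ_subset_E2 hx) hw

end IsSimpleSystem

end DihedralLimit

/-- Every point of `E₂°` lies in `E(Φ)` (so that the normalized action is defined on
it), and `E₂` is the `W`-orbit of `E₂°` under the normalized action. -/
theorem statement15 (B : LinearMap.BilinForm ℝ V) (Δ : Module.Basis ι ℝ V)
    (hsymm : ∀ u v : V, B u v = B v u)
    (hdiag : ∀ i : ι, B (Δ i) (Δ i) = 1)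
    (hoff : ∀ i j : ι, i ≠ j → B (Δ i) (Δ j) ≤ -1 ∨
      ∃ k : ℕ, 2 ≤ k ∧ B (Δ i) (Δ j) = -Real.cos (Real.pi / (k : ℝ))) :
    E2circ B Δ ⊆ Eset B Δ ∧
    (∀ x ∈ E2circ B Δ, ∀ w ∈ cox B Δ, l1 Δ (w x) ≠ 0) ∧
    E2 B Δ = { y : V | ∃ w ∈ cox B Δ, ∃ x ∈ E2circ B Δ, y = nrm Δ (w x) } := by
  have h : IsSimpleSystem B Δ := ⟨⟨hsymm⟩, hdiag, hoff⟩
  exact ⟨h.E2circ_subset_E2.trans h.E2_subset_Eset,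
    fun _ hx _ hw ↦ h.l1_apply_ne_zero_of_mem_E2 (h.E2circ_subset_E2 hx) hw, h.E2_eq_orbit⟩
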